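/- For every δ ∈ (0,1/2) and ξ > 1, one has lim_{x→∞} ∑_{H ∈ 𝔥₁} 1/ln H = ln(1/(2δ)) / (2 ln ξ). (For all sufficiently large x, every H ∈ 𝔥₁ satisfies H ≥ 2(ln x)^δ > 1, so the summands are well defined.) -/

import Mathlib

open scoped Classical

noncomputable def yy (δ x : ℝ) : ℕ := ⌈x * Real.log x ^ δ⌉₊

noncomputable def zz (δ x : ℝ) : ℝ :=
  (yy δ x : ℝ) * Real.log (Real.log x) ^ 2 / Real.log x ^ (1/2 : ℝ)

noncomputable def primesUpTo (t : ℝ) : Finset ℕ :=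
  (Finset.range (⌊t⌋₊ + 1)).filter fun p => p.Prime ∧ (p : ℝ) ≤ t

noncomputable def PP (t : ℝ) : ℕ := ∏ p ∈ primesUpTo t, p

noncomputable def sigUpTo (t : ℝ) : ℝ := ∏ p ∈ primesUpTo t, (1 - 1 / (p : ℝ))

noncomputable def primesBetween (w t : ℝ) : Finset ℕ :=
  (Finset.range (⌊t⌋₊ + 1)).filter fun p => p.Prime ∧ w < (p : ℝ) ∧ (p : ℝ) ≤ t

noncomputable def sigBetween (w t : ℝ) : ℝ := ∏ p ∈ primesBetween w t, (1 - 1 / (p : ℝ))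

def inS (t : ℝ) (b n : ℤ) : Prop :=
  ∀ p : ℕ, p.Prime → (p : ℝ) ≤ t → ¬ ((p : ℤ) ∣ (n - b))

def inSBetween (w t : ℝ) (b n : ℤ) : Prop :=
  ∀ p : ℕ, p.Prime → w < (p : ℝ) → (p : ℝ) ≤ t → ¬ ((p : ℤ) ∣ (n - b))

noncomputable def countS (t : ℝ) (b lo hi : ℤ) : ℕ :=
  ((Finset.Icc lo hi).filter (inS t b)).card

noncomputable def EE (δ x : ℝ) (g : ℤ → ℝ) : ℝ :=
  (1 / (PP (zz δ x) : ℝ)) * ∑ b ∈ Finset.range (PP (zz δ x)), g (b : ℤ)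

def frakH (δ ξ x : ℝ) : Set ℝ :=
  {H | ∃ j : ℕ, H = ξ ^ j ∧ 2 * (yy δ x : ℝ) / x ≤ H ∧ H ≤ (yy δ x : ℝ) / (ξ * zz δ x)}

def frakH1 (δ ξ x : ℝ) : Set ℝ :=
  {H | ∃ j : ℕ, Even j ∧ H = ξ ^ j ∧ 2 * (yy δ x : ℝ) / x ≤ H ∧ H ≤ (yy δ x : ℝ) / (ξ * zz δ x)}

def frakH2 (δ ξ x : ℝ) : Set ℝ :=
  {H | ∃ j : ℕ, Odd j ∧ H = ξ ^ j ∧ 2 * (yy δ x : ℝ) / x ≤ H ∧ H ≤ (yy δ x : ℝ) / (ξ * zz δ x)}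

noncomputable def QH (δ ξ x H : ℝ) : Finset ℕ :=
  (Finset.range (⌊(yy δ x : ℝ) / H⌋₊ + 1)).filter fun q =>
    q.Prime ∧ (yy δ x : ℝ) / (ξ * H) < (q : ℝ) ∧ (q : ℝ) ≤ (yy δ x : ℝ) / H

noncomputable def Hq (δ ξ x : ℝ) (q : ℕ) : ℝ :=
  if h : ∃ H ∈ frakH δ ξ x, (yy δ x : ℝ) / (ξ * H) < (q : ℝ) ∧ (q : ℝ) ≤ (yy δ x : ℝ) / H
  then h.choose else 1

noncomputable def APset (M : ℝ) (K : ℕ) (b : ℤ) (H : ℝ) (q : ℕ) (n : ℤ) : Finset ℤ :=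
  ((Finset.Icc 1 ⌊(K : ℝ) * H⌋₊).image fun h : ℕ => n + (q : ℤ) * (h : ℤ)).filter (inS (H ^ M) b)

noncomputable def lam (M zv : ℝ) (K : ℕ) (b : ℤ) (H : ℝ) (q : ℕ) (n : ℤ) : ℝ :=
  if ∀ m ∈ APset M K b H q n, inSBetween (H ^ M) zv b m
  then sigBetween (H ^ M) zv ^ (-((APset M K b H q n).card : ℤ))
  else 0

noncomputable def APsetStar (M : ℝ) (K : ℕ) (N b : ℤ) (H : ℝ) (q : ℕ) (n : ℤ) : Finset ℤ :=
  ((Finset.Icc 1 ⌊(K : ℝ) * H⌋₊).image fun h : ℕ => n - (q : ℤ) * (h : ℤ)).filter (inS (H ^ M) (-N - b))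

noncomputable def lamStar (M zv : ℝ) (K : ℕ) (N b : ℤ) (H : ℝ) (q : ℕ) (n : ℤ) : ℝ :=
  if ∀ m ∈ APsetStar M K N b H q n, inSBetween (H ^ M) zv (-N - b) m
  then sigBetween (H ^ M) zv ^ (-((APsetStar M K N b H q n).card : ℤ))
  else 0

/-!
Every even power of `ξ` is a power of `η = ξ ^ 2`, and `1 / log (η ^ i) = 1 / (i * log η)`, so the
sum is `1 / log η` times the part of the harmonic series between `log A / log η` and
`log B / log η`, where `[A, B]` is the window of admissible `H`. By the Euler–Mascheroni
asymptotics such a part tends to `log⁺ c` when its endpoints tend to infinity and their quotient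
tends to `c`; the positive part accounts for eventually empty windows. Here `log A ~ δ log log x`
and `log B ~ (1 / 2) log log x`, hence `c = 1 / (2 δ)`.
-/

section

open Filter Topology

theorem tsum_ite_even {M : Type*} [AddCommMonoid M] [TopologicalSpace M] (f : ℕ → M) :
    ∑' j : ℕ, (if Even j then f j else 0) = ∑' i : ℕ, f (2 * i) := by
  have hinj : Function.Injective fun i : ℕ => 2 * i := mul_right_injective₀ two_ne_zero
  have hsupp : Function.support (fun j => if Even j then f j else 0) ⊆
      Set.range fun i : ℕ => 2 * i := by
    intro j hj
    have heven : Even j := by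
      by_contra hodd
      exact hj (if_neg hodd)
    obtain ⟨i, rfl⟩ := heven.two_dvd
    exact ⟨i, rfl⟩
  rw [← hinj.tsum_eq hsupp]
  exact tsum_congr fun i => if_pos (even_two_mul i)

theorem sum_Ico_eq_max_zero_sub {M : Type*} [AddCommGroup M] [LinearOrder M]
    [IsOrderedAddMonoid M] {f : ℕ → M} (hf : 0 ≤ f) (m n : ℕ) :
    ∑ i ∈ Finset.Ico m n, f i =
      max 0 (∑ i ∈ Finset.range n, f i - ∑ i ∈ Finset.range m, f i) := by
  have hmono : Monotone fun n => ∑ i ∈ Finset.range n, f i :=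
    (Finset.sum_mono_set_of_nonneg hf).comp Finset.range_mono
  rcases le_total m n with hmn | hnm
  · rw [Finset.sum_Ico_eq_sub _ hmn, max_eq_right (sub_nonneg.2 (hmono hmn))]
  · rw [Finset.Ico_eq_empty_of_le hnm, Finset.sum_empty, max_eq_left (sub_nonpos.2 (hmono hnm))]

theorem tendsto_sum_range_inv_sub_log :
    Tendsto (fun n : ℕ => ∑ i ∈ Finset.range n, (i : ℝ)⁻¹ - Real.log n) atTop
      (𝓝 Real.eulerMascheroniConstant) := by
  have hharmonic (n : ℕ) : (harmonic n : ℝ) = ∑ i ∈ Finset.range n, (i : ℝ)⁻¹ + (n : ℝ)⁻¹ := by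
    rw [← Finset.sum_range_succ, Finset.sum_range_succ', harmonic]
    simp
  have h := Real.tendsto_harmonic_sub_log.sub (tendsto_inv_atTop_nhds_zero_nat (𝕜 := ℝ))
  rw [sub_zero] at h
  refine h.congr fun n => ?_
  rw [hharmonic]
  ring

variable {ι : Type*} {l : Filter ι}

theorem tendsto_atTop_of_tendsto_div {𝕜 : Type*} [Field 𝕜] [LinearOrder 𝕜]
    [IsStrictOrderedRing 𝕜] [TopologicalSpace 𝕜] [OrderTopology 𝕜] {a b : ι → 𝕜} {c : 𝕜}
    (hc : 0 < c) (ha : Tendsto a l atTop) (hab : Tendsto (fun x => b x / a x) l (𝓝 c)) :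
    Tendsto b l atTop :=
  (hab.pos_mul_atTop hc ha).congr'
    ((ha.eventually_ne_atTop 0).mono fun _ hx => div_mul_cancel₀ _ hx)

theorem tendsto_sum_Ico_inv {m n : ι → ℕ} {c : ℝ} (hc : 0 < c) (hm : Tendsto m l atTop)
    (hmn : Tendsto (fun x => (n x : ℝ) / m x) l (𝓝 c)) :
    Tendsto (fun x => ∑ i ∈ Finset.Ico (m x) (n x), (i : ℝ)⁻¹) l (𝓝 (Real.posLog c)) := by
  have hn : Tendsto n l atTop := tendsto_natCast_atTop_iff.1 <|
    tendsto_atTop_of_tendsto_div hc (tendsto_natCast_atTop_iff.2 hm) hmn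
  have hdiff : Tendsto (fun x => ∑ i ∈ Finset.range (n x), (i : ℝ)⁻¹ -
      ∑ i ∈ Finset.range (m x), (i : ℝ)⁻¹) l (𝓝 (Real.log c)) := by
    have h := ((tendsto_sum_range_inv_sub_log.comp hn).sub
      (tendsto_sum_range_inv_sub_log.comp hm)).add (hmn.log hc.ne')
    rw [sub_self, zero_add] at h
    refine h.congr' ?_
    filter_upwards [hm.eventually_ne_atTop 0, hn.eventually_ne_atTop 0] with x hmx hnx
    rw [Real.log_div (Nat.cast_ne_zero.2 hnx) (Nat.cast_ne_zero.2 hmx)]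
    simp only [Function.comp_apply]
    ring
  refine (tendsto_const_nhds.max hdiff).congr fun x => ?_
  exact (sum_Ico_eq_max_zero_sub (fun i => inv_nonneg.2 i.cast_nonneg) _ _).symm

theorem tsum_ite_le_and_le_eq_sum_Ico {R M : Type*} [Semiring R] [LinearOrder R] [FloorSemiring R]
    [AddCommMonoid M] [TopologicalSpace M] (f : ℕ → M) (a : R) {b : R} (hb : 0 ≤ b) :
    ∑' i : ℕ, (if a ≤ i ∧ (i : R) ≤ b then f i else 0) =
      ∑ i ∈ Finset.Ico ⌈a⌉₊ (⌊b⌋₊ + 1), f i := by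
  have hmem (i : ℕ) : a ≤ i ∧ (i : R) ≤ b ↔ i ∈ Finset.Ico ⌈a⌉₊ (⌊b⌋₊ + 1) := by
    rw [Finset.mem_Ico, Nat.ceil_le, Nat.lt_add_one_iff, Nat.le_floor_iff hb]
  rw [tsum_eq_sum fun i hi => if_neg (mt (hmem i).1 hi)]
  exact Finset.sum_congr rfl fun i hi => if_pos ((hmem i).2 hi)

theorem tendsto_nat_floor_add_one_div_atTop {R : Type*} [TopologicalSpace R] [Field R]
    [LinearOrder R] [IsStrictOrderedRing R] [OrderTopology R] [FloorRing R] :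
    Tendsto (fun t : R => ((⌊t⌋₊ + 1 : ℕ) : R) / t) atTop (𝓝 1) := by
  have h := (tendsto_nat_floor_div_atTop (R := R)).add tendsto_inv_atTop_zero
  rw [add_zero] at h
  refine h.congr fun t => ?_
  rw [Nat.cast_add_one, add_div, one_div]

theorem tendsto_tsum_inv_between {a b : ι → ℝ} {c : ℝ} (hc : 0 < c) (ha : Tendsto a l atTop)
    (hab : Tendsto (fun x => b x / a x) l (𝓝 c)) :
    Tendsto (fun x => ∑' i : ℕ, if a x ≤ i ∧ (i : ℝ) ≤ b x then (i : ℝ)⁻¹ else 0) l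
      (𝓝 (Real.posLog c)) := by
  have hb : Tendsto b l atTop := tendsto_atTop_of_tendsto_div hc ha hab
  have hratio : Tendsto (fun x => ((⌊b x⌋₊ + 1 : ℕ) : ℝ) / ⌈a x⌉₊) l (𝓝 c) := by
    have h := ((tendsto_nat_floor_add_one_div_atTop.comp hb).mul hab).div
      (tendsto_nat_ceil_div_atTop.comp ha) one_ne_zero
    rw [one_mul, div_one] at h
    refine h.congr' ?_
    filter_upwards [ha.eventually_ne_atTop 0, hb.eventually_ne_atTop 0] with x hax hbx
    simp only [Pi.div_apply, Function.comp_apply]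
    rw [div_mul_div_cancel₀ hbx, div_div_div_cancel_right₀ hax]
  refine (tendsto_sum_Ico_inv hc (tendsto_nat_ceil_atTop.comp ha) hratio).congr' ?_
  filter_upwards [hb.eventually_ge_atTop 0] with x hbx
  exact (tsum_ite_le_and_le_eq_sum_Ico _ (a x) hbx).symm

theorem tsum_inv_log_pow_between {η A B : ℝ} (hη : 1 < η) (hA : 0 < A) (hB : 0 < B) :
    ∑' i : ℕ, (if A ≤ η ^ i ∧ η ^ i ≤ B then 1 / Real.log (η ^ i) else 0) =
      (∑' i : ℕ, if Real.log A / Real.log η ≤ i ∧ (i : ℝ) ≤ Real.log B / Real.log η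
        then (i : ℝ)⁻¹ else 0) / Real.log η := by
  have hlog : 0 < Real.log η := Real.log_pos hη
  rw [← tsum_div_const]
  refine tsum_congr fun i => ?_
  have hpow : 0 < η ^ i := pow_pos (one_pos.trans hη) i
  have hlower : A ≤ η ^ i ↔ Real.log A / Real.log η ≤ i := by
    rw [← Real.log_le_log_iff hA hpow, Real.log_pow, div_le_iff₀ hlog]
  have hupper : η ^ i ≤ B ↔ (i : ℝ) ≤ Real.log B / Real.log η := by
    rw [← Real.log_le_log_iff hpow hB, Real.log_pow, le_div_iff₀ hlog]
  simp only [hlower, hupper, Real.log_pow, one_div, mul_inv, ite_div, zero_div, ← div_eq_mul_inv]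

theorem tendsto_tsum_inv_log_pow_between {A B : ι → ℝ} {η c : ℝ} (hη : 1 < η) (hc : 0 < c)
    (hA : Tendsto A l atTop) (hB : ∀ᶠ x in l, 0 < B x)
    (hAB : Tendsto (fun x => Real.log (B x) / Real.log (A x)) l (𝓝 c)) :
    Tendsto (fun x => ∑' i : ℕ,
        if A x ≤ η ^ i ∧ η ^ i ≤ B x then 1 / Real.log (η ^ i) else 0) l
      (𝓝 (Real.posLog c / Real.log η)) := by
  have hlog : 0 < Real.log η := Real.log_pos hη
  have ha : Tendsto (fun x => Real.log (A x) / Real.log η) l atTop :=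
    (Real.tendsto_log_atTop.comp hA).atTop_div_const hlog
  have hab : Tendsto (fun x => Real.log (B x) / Real.log η / (Real.log (A x) / Real.log η)) l
      (𝓝 c) :=
    hAB.congr fun x => (div_div_div_cancel_right₀ hlog.ne' _ _).symm
  refine ((tendsto_tsum_inv_between hc ha hab).div_const (Real.log η)).congr' ?_
  filter_upwards [hA.eventually_gt_atTop 0, hB] with x hAx hBx
  exact (tsum_inv_log_pow_between hη hAx hBx).symm

theorem tendsto_log_rpow_mul_div_log {t v : ι → ℝ} (α : ℝ) (ht : Tendsto t l atTop)
    (hv₀ : ∀ᶠ x in l, v x ≠ 0)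
    (hv : Tendsto (fun x => Real.log (v x) / Real.log (t x)) l (𝓝 0)) :
    Tendsto (fun x => Real.log (t x ^ α * v x) / Real.log (t x)) l (𝓝 α) := by
  have h := hv.const_add α
  rw [add_zero] at h
  refine h.congr' ?_
  filter_upwards [ht.eventually_gt_atTop 1, hv₀] with x htx hvx
  have ht₀ : 0 < t x := one_pos.trans htx
  rw [Real.log_mul (Real.rpow_pos_of_pos ht₀ α).ne' hvx, Real.log_rpow ht₀, add_div,
    mul_div_cancel_right₀ _ (Real.log_pos htx).ne']

theorem yy_pos (δ : ℝ) {x : ℝ} (hx : 1 < x) : 0 < yy δ x :=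
  Nat.ceil_pos.2 (mul_pos (one_pos.trans hx) (Real.rpow_pos_of_pos (Real.log_pos hx) δ))

theorem two_mul_log_rpow_le_two_mul_yy_div (δ : ℝ) {x : ℝ} (hx : 0 < x) :
    2 * Real.log x ^ δ ≤ 2 * (yy δ x : ℝ) / x := by
  have hceil : x * Real.log x ^ δ ≤ yy δ x := Nat.le_ceil _
  rw [le_div_iff₀ hx]
  linarith

theorem yy_div_mul_zz_eq (δ ξ : ℝ) {x : ℝ} (hx : 1 < x) :
    (yy δ x : ℝ) / (ξ * zz δ x) =
      Real.log x ^ (1 / 2 : ℝ) * (ξ * Real.log (Real.log x) ^ 2)⁻¹ := by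
  have hy : (yy δ x : ℝ) ≠ 0 := Nat.cast_ne_zero.2 (yy_pos δ hx).ne'
  have hroot : Real.log x ^ (1 / 2 : ℝ) ≠ 0 := (Real.rpow_pos_of_pos (Real.log_pos hx) _).ne'
  rw [zz]
  field_simp

theorem tendsto_log_rpow_atTop {δ : ℝ} (hδ : 0 < δ) :
    Tendsto (fun x => Real.log x ^ δ) atTop atTop :=
  (tendsto_rpow_atTop hδ).comp Real.tendsto_log_atTop

theorem tendsto_log_log_atTop : Tendsto (fun x => Real.log (Real.log x)) atTop atTop :=
  Real.tendsto_log_atTop.comp Real.tendsto_log_atTop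

theorem tendsto_two_mul_yy_div_atTop {δ : ℝ} (hδ : 0 < δ) :
    Tendsto (fun x => 2 * (yy δ x : ℝ) / x) atTop atTop :=
  tendsto_atTop_mono' _
    ((eventually_gt_atTop 0).mono fun _ => two_mul_log_rpow_le_two_mul_yy_div δ)
    ((tendsto_log_rpow_atTop hδ).const_mul_atTop two_pos)

theorem tendsto_log_two_mul_yy_div {δ : ℝ} (hδ : 0 < δ) :
    Tendsto (fun x => Real.log (2 * (yy δ x : ℝ) / x) / Real.log (Real.log x)) atTop (𝓝 δ) := by
  have hv : Tendsto (fun x => 2 * ((yy δ x : ℝ) / (x * Real.log x ^ δ))) atTop (𝓝 (2 * 1)) :=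
    (tendsto_nat_ceil_div_atTop.comp
      (tendsto_id.atTop_mul_atTop₀ (tendsto_log_rpow_atTop hδ))).const_mul 2
  have hne : (2 * 1 : ℝ) ≠ 0 := by norm_num
  refine (tendsto_log_rpow_mul_div_log δ Real.tendsto_log_atTop (hv.eventually_ne hne)
    ((hv.log hne).div_atTop tendsto_log_log_atTop)).congr' ?_
  filter_upwards [eventually_gt_atTop 1] with x hx
  have hrpow : Real.log x ^ δ ≠ 0 := (Real.rpow_pos_of_pos (Real.log_pos hx) δ).ne'
  congr 2
  field_simp

theorem tendsto_log_yy_div_mul_zz (δ : ℝ) {ξ : ℝ} (hξ : ξ ≠ 0) :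
    Tendsto (fun x => Real.log ((yy δ x : ℝ) / (ξ * zz δ x)) / Real.log (Real.log x)) atTop
      (𝓝 (1 / 2)) := by
  have hne : ∀ᶠ x in atTop, Real.log (Real.log x) ≠ 0 :=
    tendsto_log_log_atTop.eventually_ne_atTop 0
  have hlog : Tendsto (fun x => Real.log ((ξ * Real.log (Real.log x) ^ 2)⁻¹) /
      Real.log (Real.log x)) atTop (𝓝 0) := by
    have h := ((tendsto_log_log_atTop.const_div_atTop (Real.log ξ)).add
      ((Real.isLittleO_log_id_atTop.tendsto_div_nhds_zero.comp
        tendsto_log_log_atTop).const_mul 2)).neg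
    rw [mul_zero, add_zero, neg_zero] at h
    refine h.congr' ?_
    filter_upwards [hne] with x hx
    rw [Real.log_inv, Real.log_mul hξ (pow_ne_zero 2 hx), Real.log_pow]
    simp only [Function.comp_apply, id_eq, Nat.cast_ofNat]
    ring
  refine (tendsto_log_rpow_mul_div_log (1 / 2) Real.tendsto_log_atTop
    (hne.mono fun x hx => inv_ne_zero (mul_ne_zero hξ (pow_ne_zero 2 hx))) hlog).congr' ?_
  filter_upwards [eventually_gt_atTop 1] with x hx
  rw [yy_div_mul_zz_eq δ ξ hx]

theorem eventually_yy_div_mul_zz_pos (δ : ℝ) {ξ : ℝ} (hξ : 0 < ξ) :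
    ∀ᶠ x in atTop, 0 < (yy δ x : ℝ) / (ξ * zz δ x) := by
  filter_upwards [eventually_gt_atTop 1, tendsto_log_log_atTop.eventually_gt_atTop 0]
    with x hx hloglog
  have hlog : 0 < Real.log x := Real.log_pos hx
  rw [yy_div_mul_zz_eq δ ξ hx]
  positivity

theorem stmt10_general {δ ξ : ℝ} (hδ : 0 < δ) (hξ : 1 < ξ) :
    Tendsto (fun x : ℝ =>
        ∑' j : ℕ, if Even j ∧ 2 * (yy δ x : ℝ) / x ≤ ξ ^ j ∧
            ξ ^ j ≤ (yy δ x : ℝ) / (ξ * zz δ x)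
          then 1 / Real.log (ξ ^ j) else 0)
      atTop (𝓝 (Real.posLog (1 / (2 * δ)) / (2 * Real.log ξ))) := by
  have hratio : Tendsto (fun x => Real.log ((yy δ x : ℝ) / (ξ * zz δ x)) /
      Real.log (2 * (yy δ x : ℝ) / x)) atTop (𝓝 (1 / (2 * δ))) := by
    have h := (tendsto_log_yy_div_mul_zz δ (one_pos.trans hξ).ne').div
      (tendsto_log_two_mul_yy_div hδ) hδ.ne'
    rw [div_div] at h
    refine h.congr' ?_
    filter_upwards [tendsto_log_log_atTop.eventually_ne_atTop 0] with x hx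
    exact div_div_div_cancel_right₀ hx _ _
  have hlog : Real.log (ξ ^ 2) = 2 * Real.log ξ := by rw [Real.log_pow, Nat.cast_ofNat]
  have h := tendsto_tsum_inv_log_pow_between (one_lt_pow₀ hξ two_ne_zero) (by positivity)
    (tendsto_two_mul_yy_div_atTop hδ)
    (eventually_yy_div_mul_zz_pos δ (one_pos.trans hξ)) hratio
  rw [hlog] at h
  simpa only [ite_and, tsum_ite_even, pow_mul] using h

end

theorem stmt10 (δ ξ : ℝ) (hδ0 : 0 < δ) (hδ1 : δ < 1/2) (hξ : 1 < ξ) :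
    Filter.Tendsto (fun x : ℝ =>
        ∑' j : ℕ, if Even j ∧ 2 * (yy δ x : ℝ) / x ≤ ξ ^ j ∧
            ξ ^ j ≤ (yy δ x : ℝ) / (ξ * zz δ x)
          then 1 / Real.log (ξ ^ j) else 0)
      Filter.atTop (nhds (Real.log (1 / (2 * δ)) / (2 * Real.log ξ))) := by
  have hc : 1 ≤ 1 / (2 * δ) := (one_le_div (by positivity)).2 (by linarith)
  exact Real.posLog_eq_log (hc.trans (le_abs_self _)) ▸ stmt10_general hδ0 hξ
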